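/- arXiv:2311.03256 — 4 statements merged into one kernel-verified Lean document; each statement's English description precedes it below -/
import Mathlib

section
/- Let N be a natural number, p1, p2 reals with 0 < p1 < 1 and 0 < p2 < 1, and let i, j be natural numbers with i + j ≤ N. Then for all integers x, y with 0 ≤ x, 0 ≤ y and x + y ≤ N, the bivariate Tratnik polynomials satisfy the difference relation −(j+1)·T_{i,j}(x,y) = (1−p2)(y+1)·T_{i,j}(x,y+1) + p2(N−x−y+1)·T_{i,j}(x,y−1) − [(1−p2)(y+1) + p2(N−x−y+1)]·T_{i,j}(x,y), where arguments of T outside the range 0 ≤ x ≤ N (or with y < 0) give the value 0 by the defining convention. -/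
/-!
Only the second factor `k_j(y; p₂, M)`, with `M = N - x`, depends on `y`, so the relation is the
classical second order difference equation of the Krawtchouk polynomials, transported through the
renormalizing weight `w(y) = (p/(1-p))^y C(M,y)`.

For `j ≤ M` the polynomial is expanded in the binomial basis `C(y,m)`, on which the difference
operator is bidiagonal (`krawOp_choose`); the two-term recurrence of the hypergeometric
coefficients (`krawCoeff_succ`) turns the required identity into a telescoping sum (`krawF_diff`).
The ratio `w(y+1)/w(y)` (`krawWeight_succ`) then gives the relation for `k_j` itself. If `j > M`,
the difference equation is not available, but then `x > N - j`, so the first factor contains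
`C(N-j, x) = 0` and both sides vanish.
-/

/-- The (renormalized) Krawtchouk polynomial `k_n(x; p, N)`.
For `x ≥ 0` it equals `(p/(1-p))^x * C(N,x) * ₂F₁(-n,-x;-N;1/p)` written as a finite sum,
and it is `0` for `x < 0`. -/
noncomputable def kraw (p : ℝ) (N n : ℕ) (x : ℤ) : ℝ :=
  if x < 0 then 0
  else (p / (1 - p)) ^ x * (N.choose x.toNat : ℝ) *
    ∑ m ∈ Finset.range (min n x.toNat + 1),
      (-1 : ℝ) ^ m * (n.choose m : ℝ) * (x.toNat.choose m : ℝ) * (m.factorial : ℝ) *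
        ((N - m).factorial / (N.factorial : ℝ)) * p ^ (-(m : ℤ))

/-- The bivariate Tratnik polynomial of Krawtchouk type `T_{i,j}(x,y; p1,p2,N)`. -/
noncomputable def tratnik (p1 p2 : ℝ) (N i j : ℕ) (x y : ℤ) : ℝ :=
  if x < 0 ∨ (N : ℤ) < x then 0
  else kraw p1 (N - j) i x * kraw p2 (N - x.toNat) j y

/-- The coefficient of `C(y,m)` in `₂F₁(-n,-y;-M;1/p)`. -/
noncomputable def krawCoeff (p : ℝ) (M n m : ℕ) : ℝ :=
  (-1 : ℝ) ^ m * (n.choose m : ℝ) * (m.factorial : ℝ) *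
    ((M - m).factorial / (M.factorial : ℝ)) * p ^ (-(m : ℤ))

/-- The polynomial `₂F₁(-n,-y;-M;1/p)` at a natural number `y`. The summation runs to `n`
independently of `y`, the terms with `m > y` being zero. -/
noncomputable def krawF (p : ℝ) (M n y : ℕ) : ℝ :=
  ∑ m ∈ Finset.range (n + 1), krawCoeff p M n m * (y.choose m : ℝ)

/-- The weight `(p/(1-p))^y C(M,y)`. -/
noncomputable def krawWeight (p : ℝ) (M y : ℕ) : ℝ :=
  (p / (1 - p)) ^ y * (M.choose y : ℝ)

lemma kraw_natCast (p : ℝ) (M n y : ℕ) :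
    kraw p M n (y : ℤ) = krawWeight p M y * krawF p M n y := by
  have h0 : ¬ ((y : ℤ) < 0) := by omega
  unfold kraw krawWeight krawF
  rw [if_neg h0, zpow_natCast, Int.toNat_natCast]
  congr 1
  have hsub : Finset.range (min n y + 1) ⊆ Finset.range (n + 1) := by
    intro m hm
    simp only [Finset.mem_range] at *
    omega
  rw [← Finset.sum_subset hsub]
  · refine Finset.sum_congr rfl fun m _ => ?_
    unfold krawCoeff
    ring
  · intro m hm hm'
    simp only [Finset.mem_range] at hm hm'
    rw [Nat.choose_eq_zero_of_lt (show y < m by omega)]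
    simp

lemma krawCoeff_succ (p : ℝ) (hp : p ≠ 0) (M n m : ℕ) (hn : n ≤ M) :
    krawCoeff p M n (m + 1) * (p * ((M : ℝ) - m)) = -(((n : ℝ) - m) * krawCoeff p M n m) := by
  unfold krawCoeff
  rcases lt_trichotomy m n with h | h | h
  · obtain ⟨d, rfl⟩ : ∃ d, M = m + 1 + d := ⟨M - (m + 1), by omega⟩
    have e1 : m + 1 + d - (m + 1) = d := by omega
    have e2 : m + 1 + d - m = d + 1 := by omega
    have hc : (n.choose (m + 1) : ℝ) * ((m : ℝ) + 1) = n.choose m * ((n : ℝ) - m) := by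
      have := Nat.choose_succ_right_eq n m
      rw [← Nat.cast_sub h.le]
      exact_mod_cast this
    have hz : p ^ (-((m + 1 : ℕ) : ℤ)) * p = p ^ (-(m : ℤ)) := by
      rw [← zpow_add_one₀ hp]
      congr 1
      push_cast
      ring
    rw [e1, e2, Nat.factorial_succ m, Nat.factorial_succ d, ← hz]
    push_cast
    linear_combination (-(-1 : ℝ) ^ m * m.factorial *
      (d.factorial / ((m + 1 + d).factorial : ℝ)) * (d + 1) *
        p ^ (-((m : ℤ) + 1)) * p) * hc
  · subst h
    simp
  · simp [Nat.choose_eq_zero_of_lt h, Nat.choose_eq_zero_of_lt (show n < m + 1 by omega)]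

lemma choose_mul_cast (y m : ℕ) :
    (y : ℝ) * y.choose m = (m + 1) * y.choose (m + 1) + m * y.choose m := by
  have h : ((y : ℝ) + 1) * y.choose m = (y + 1).choose (m + 1) * ((m : ℝ) + 1) := by
    exact_mod_cast Nat.add_one_mul_choose_eq y m
  rw [Nat.choose_succ_succ] at h
  push_cast at h
  linear_combination h

/-- The Krawtchouk difference operator is bidiagonal in the binomial basis. -/
lemma krawOp_choose (p : ℝ) (M y m : ℕ) :
    p * ((M : ℝ) - y) * (y + 1).choose (m + 1) + y * (1 - p) * (y - 1).choose (m + 1)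
      - (p * ((M : ℝ) - y) + y * (1 - p)) * y.choose (m + 1)
    = p * ((M : ℝ) - m) * y.choose m - (m + 1) * y.choose (m + 1) := by
  have h1 := choose_mul_cast y m
  have h2 : (y : ℝ) * (y.choose (m + 1) - (y - 1).choose (m + 1)) =
      (m + 1) * y.choose (m + 1) := by
    cases y with
    | zero => simp
    | succ z =>
      have h : ((z : ℝ) + 1) * z.choose m = (z + 1).choose (m + 1) * ((m : ℝ) + 1) := by
        exact_mod_cast Nat.add_one_mul_choose_eq z m
      have h' : ((z + 1).choose (m + 1) : ℝ) = z.choose m + z.choose (m + 1) := by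
        exact_mod_cast Nat.choose_succ_succ z m
      simp only [Nat.add_sub_cancel]
      push_cast
      linear_combination h + ((z : ℝ) + 1) * h'
  have h3 : ((y + 1).choose (m + 1) : ℝ) = y.choose m + y.choose (m + 1) := by
    exact_mod_cast Nat.choose_succ_succ y m
  linear_combination p * ((M : ℝ) - y) * h3 - (1 - p) * h2 - p * h1

/-- The difference equation of the (unweighted) Krawtchouk polynomials. At `y = 0` the truncated
`y - 1` is harmless because of the factor `y`. -/
lemma krawF_diff (p : ℝ) (hp : p ≠ 0) (M n y : ℕ) (hn : n ≤ M) :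
    p * ((M : ℝ) - y) * krawF p M n (y + 1) + y * (1 - p) * krawF p M n (y - 1)
      - (p * ((M : ℝ) - y) + y * (1 - p)) * krawF p M n y = -(n * krawF p M n y) := by
  -- `A (m + 1)` is the off-diagonal contribution of `C(y,m+1)`, which lands on `C(y,m)`.
  let A : ℕ → ℝ := fun m => match m with
    | 0 => 0
    | m + 1 => krawCoeff p M n (m + 1) * (p * ((M : ℝ) - m)) * y.choose m
  have hA : ∀ m, A (m + 1) = -(((n : ℝ) - m) * krawCoeff p M n m) * y.choose m := by
    intro m
    change krawCoeff p M n (m + 1) * (p * ((M : ℝ) - m)) * y.choose m = _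
    rw [krawCoeff_succ p hp M n m hn]
  have key : ∀ m, p * ((M : ℝ) - y) * (krawCoeff p M n m * (y + 1).choose m)
      + y * (1 - p) * (krawCoeff p M n m * (y - 1).choose m)
      - (p * ((M : ℝ) - y) + y * (1 - p)) * (krawCoeff p M n m * y.choose m)
      + n * (krawCoeff p M n m * y.choose m) = A m - A (m + 1) := by
    intro m
    rw [hA]
    cases m with
    | zero =>
      change _ = (0 : ℝ) - _
      simp only [Nat.choose_zero_right, Nat.cast_zero, Nat.cast_one]
      ring
    | succ m =>
      change _ = krawCoeff p M n (m + 1) * (p * ((M : ℝ) - m)) * y.choose m - _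
      push_cast
      linear_combination krawCoeff p M n (m + 1) * krawOp_choose p M y m
  have hsum := Finset.sum_congr (rfl : Finset.range (n + 1) = _) fun m _ => key m
  rw [Finset.sum_range_sub', hA n] at hsum
  simp only [Finset.sum_add_distrib, Finset.sum_sub_distrib, ← Finset.mul_sum] at hsum
  change _ = (0 : ℝ) - _ at hsum
  unfold krawF
  linear_combination hsum

lemma krawWeight_succ (p : ℝ) (hp : p < 1) (M y : ℕ) (hy : y ≤ M) :
    (1 - p) * ((y : ℝ) + 1) * krawWeight p M (y + 1) = p * ((M : ℝ) - y) * krawWeight p M y := by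
  have hq : (1 - p) ≠ 0 := by linarith
  have hc : (M.choose (y + 1) : ℝ) * ((y : ℝ) + 1) = M.choose y * ((M : ℝ) - y) := by
    rw [← Nat.cast_sub hy]
    exact_mod_cast Nat.choose_succ_right_eq M y
  have hd : (1 - p) * (p / (1 - p)) = p := by field_simp
  unfold krawWeight
  rw [pow_succ]
  linear_combination (p / (1 - p)) ^ y * M.choose (y + 1) * ((y : ℝ) + 1) * hd
    + (p / (1 - p)) ^ y * p * hc

lemma kraw_diff (p : ℝ) (hp : 0 < p) (hp' : p < 1) (M n y : ℕ) (hn : n ≤ M) (hy : y ≤ M) :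
    -((n : ℝ) + 1) * kraw p M n y =
      (1 - p) * ((y : ℝ) + 1) * kraw p M n ((y : ℤ) + 1)
      + p * ((M : ℝ) - y + 1) * kraw p M n ((y : ℤ) - 1)
      - ((1 - p) * ((y : ℝ) + 1) + p * ((M : ℝ) - y + 1)) * kraw p M n y := by
  have hF := krawF_diff p hp.ne' M n y hn
  have hW := krawWeight_succ p hp' M y hy
  have hprev : p * ((M : ℝ) - y + 1) * kraw p M n ((y : ℤ) - 1) =
      y * (1 - p) * krawWeight p M y * krawF p M n (y - 1) := by
    cases y with
    | zero => simp [kraw]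
    | succ z =>
      have hz := krawWeight_succ p hp' M z (by omega)
      have e : (((z + 1 : ℕ) : ℤ) - 1) = (z : ℤ) := by push_cast; ring
      rw [e, kraw_natCast, Nat.add_sub_cancel]
      push_cast
      linear_combination -krawF p M n z * hz
  have e : ((y : ℤ) + 1) = ((y + 1 : ℕ) : ℤ) := by push_cast; ring
  rw [hprev, e, kraw_natCast, kraw_natCast]
  linear_combination -krawF p M n (y + 1) * hW - krawWeight p M y * hF

/-- Difference relation (first) for the bivariate Tratnik polynomials. -/
theorem tratnik_difference_j (N : ℕ) (p1 p2 : ℝ)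
    (hp1 : 0 < p1) (hp1' : p1 < 1) (hp2 : 0 < p2) (hp2' : p2 < 1)
    (i j : ℕ) (hij : i + j ≤ N)
    (x y : ℤ) (hx : 0 ≤ x) (hy : 0 ≤ y) (hxy : x + y ≤ (N : ℤ)) :
    -((j : ℝ) + 1) * tratnik p1 p2 N i j x y =
      (1 - p2) * ((y : ℝ) + 1) * tratnik p1 p2 N i j x (y + 1)
      + p2 * ((N : ℝ) - x - y + 1) * tratnik p1 p2 N i j x (y - 1)
      - ((1 - p2) * ((y : ℝ) + 1) + p2 * ((N : ℝ) - x - y + 1))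
          * tratnik p1 p2 N i j x y := by
  lift x to ℕ using hx
  lift y to ℕ using hy
  have hx' : ¬ ((x : ℤ) < 0 ∨ (N : ℤ) < x) := by omega
  simp only [tratnik, if_neg hx', Int.toNat_natCast, Int.cast_natCast]
  by_cases hj : j ≤ N - x
  · have h := kraw_diff p2 hp2 hp2' (N - x) j y hj (by omega)
    rw [Nat.cast_sub (show x ≤ N by omega)] at h
    linear_combination kraw p1 (N - j) i x * h
  · have h0 : kraw p1 (N - j) i x = 0 := by
      rw [kraw_natCast, krawWeight, Nat.choose_eq_zero_of_lt (show N - j < x by omega)]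
      simp
    simp [h0]
end

section
/- Let N be a natural number, p1, p2 reals with 0 < p1 < 1 and 0 < p2 < 1, and let i, j be natural numbers with i + j ≤ N. Then for all integers x, y with 0 ≤ x, 0 ≤ y and x + y ≤ N, the bivariate Tratnik polynomials satisfy the difference relation −(i+1)·T_{i,j}(x,y) = (1−p1)(x+1)·T_{i,j}(x+1,y) + p1(1−p2)(N−x−y+1)·T_{i,j}(x−1,y) − p1(1−p2)(y+1)·T_{i,j}(x,y+1) − p1 p2 (N−x−y+1)·T_{i,j}(x,y−1) + ((1−p1)p2/(1−p2))(x+1)·T_{i,j}(x+1,y−1) + p1(1−p2)(y+1)·T_{i,j}(x−1,y+1) − [(1−p1)(x+1) + p1 p2 (y+1) + p1(1−p2)(N−x−y+1)]·T_{i,j}(x,y), where arguments of T outside the range 0 ≤ x ≤ N (or with y < 0) give the value 0 by the defining convention. -/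
open Polynomial

/-! ### The generating function -/

/-- The generating function `(1 - z) ^ n * (1 + r z) ^ d` of the Krawtchouk polynomials, with
`d` in the role of `N - n` and `r` in that of `p / (1 - p)`. -/
noncomputable def krawGen (r : ℝ) (n d : ℕ) : ℝ[X] := (1 - X) ^ n * (1 + C r * X) ^ d

/-- The `m`-th summand defining `k_n(x; p, N)` is the coefficient of `z ^ x` in the `m`-th summand
of the binomial expansion of `((1 + r z) - z / (1 - p)) ^ n * (1 + r z) ^ (N - n)`. -/
lemma kraw_coeff_summand (p : ℝ) (hp : 0 < p) (hp' : p < 1) (N n x m : ℕ) (hn : n ≤ N)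
    (hm : m ≤ n) (hmx : m ≤ x) :
    (p / (1 - p)) ^ x * (N.choose x : ℝ) * ((-1 : ℝ) ^ m * (n.choose m : ℝ) * (x.choose m : ℝ) *
      (m.factorial : ℝ) * ((N - m).factorial / (N.factorial : ℝ)) * p ^ (-(m : ℤ))) =
    (-1 / (1 - p)) ^ m * (n.choose m : ℝ) *
      ((p / (1 - p)) ^ (x - m) * ((N - m).choose (x - m) : ℝ)) := by
  have hq : (1 - p) ≠ 0 := by linarith
  have hN : (N.factorial : ℝ) ≠ 0 := by positivity
  have h2 : (N.choose m : ℝ) * m.factorial * (N - m).factorial = N.factorial := by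
    exact_mod_cast Nat.choose_mul_factorial_mul_factorial (hm.trans hn)
  have h1 : (N.choose x : ℝ) * x.choose m = N.choose m * (N - m).choose (x - m) := by
    exact_mod_cast Nat.choose_mul (n := N) (k := x) (s := m) hmx
  have h3 : (p / (1 - p)) ^ x = (p / (1 - p)) ^ (x - m) * (p ^ m / (1 - p) ^ m) := by
    rw [← div_pow, ← pow_add, Nat.sub_add_cancel hmx]
  rw [zpow_neg, zpow_natCast, h3, div_pow (-1 : ℝ)]
  field_simp
  linear_combination ((n.choose m : ℝ) * m.factorial * (N - m).factorial) * h1 +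
    ((n.choose m : ℝ) * (N - m).choose (x - m)) * h2

lemma coeff_one_add_mul_X_pow (r : ℝ) (d k : ℕ) :
    ((1 + C r * X : ℝ[X]) ^ d).coeff k = r ^ k * (d.choose k : ℝ) := by
  have h : (1 + C r * X : ℝ[X]) ^ d = ((1 + X) ^ d : ℝ[X]).comp (C r * X) := by simp
  rw [h, comp_C_mul_X_coeff, coeff_one_add_X_pow, mul_comm]

lemma kraw_eq_coeff (p : ℝ) (hp : 0 < p) (hp' : p < 1) (N n x : ℕ) (hn : n ≤ N) :
    kraw p N n (x : ℤ) = (krawGen (p / (1 - p)) n (N - n)).coeff x := by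
  have hq : (1 - p) ≠ 0 := by linarith
  set r := p / (1 - p) with hr
  have hgen : krawGen r n (N - n) = ∑ m ∈ Finset.range (n + 1),
      C ((-1 / (1 - p)) ^ m * (n.choose m : ℝ)) * ((1 + C r * X) ^ (N - m) * X ^ m) := by
    have h1 : (1 - X : ℝ[X]) = C (-1 / (1 - p)) * X + (1 + C r * X) := by
      have : (-1 / (1 - p)) = -1 - r := by rw [hr]; field_simp; ring
      rw [this]; simp; ring
    rw [krawGen, h1, add_pow, Finset.sum_mul]
    refine Finset.sum_congr rfl fun m hm => ?_
    have hm' : m ≤ n := by simpa [Nat.lt_succ_iff] using hm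
    have : N - m = (n - m) + (N - n) := by omega
    rw [this, pow_add]
    simp only [map_mul, map_pow, map_natCast, mul_pow]
    ring
  rw [hgen, finsetSum_coeff, kraw, if_neg (by omega), Int.toNat_natCast, zpow_natCast,
    Finset.mul_sum]
  refine Finset.sum_subset_zero_on_sdiff (by intro m; simp; omega) ?_ ?_
  · intro m hm
    simp only [Finset.mem_sdiff, Finset.mem_range] at hm
    rw [coeff_C_mul, coeff_mul_X_pow', if_neg (by omega), mul_zero]
  · intro m hm
    simp only [Finset.mem_range] at hm
    rw [coeff_C_mul, coeff_mul_X_pow', if_pos (by omega), coeff_one_add_mul_X_pow, hr,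
      kraw_coeff_summand p hp hp' N n x m hn (by omega) (by omega)]

lemma kraw_sub_one_eq_coeff (p : ℝ) (hp : 0 < p) (hp' : p < 1) (N n x : ℕ) (hn : n ≤ N) :
    kraw p N n ((x : ℤ) - 1) = (X * krawGen (p / (1 - p)) n (N - n)).coeff x := by
  cases x with
  | zero => simp [kraw]
  | succ x => rw [coeff_X_mul, ← kraw_eq_coeff p hp hp' N n x hn]; push_cast; simp

lemma kraw_add_one_eq_coeff (p : ℝ) (hp : 0 < p) (hp' : p < 1) (N n x : ℕ) (hn : n ≤ N) :
    ((x : ℝ) + 1) * kraw p N n ((x : ℤ) + 1) =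
      (derivative (krawGen (p / (1 - p)) n (N - n))).coeff x := by
  rw [coeff_derivative, ← kraw_eq_coeff p hp hp' N n _ hn]; push_cast; ring

lemma kraw_eq_zero_of_lt (p : ℝ) (N n : ℕ) (x : ℤ) (hx : (N : ℤ) < x) : kraw p N n x = 0 := by
  rw [kraw, if_neg (by omega), Nat.choose_eq_zero_of_lt (by omega)]; simp

/-! ### Relations for the univariate polynomials -/

lemma coeff_X_mul_derivative (F : ℝ[X]) (x : ℕ) :
    (X * derivative F).coeff x = x * F.coeff x := by
  cases x with
  | zero => simp
  | succ x => rw [coeff_X_mul, coeff_derivative]; push_cast; ring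

lemma coeff_X_mul_X_mul_derivative (F : ℝ[X]) (x : ℕ) :
    (X * (X * derivative F)).coeff x = ((x : ℝ) - 1) * (X * F).coeff x := by
  cases x with
  | zero => simp
  | succ x => rw [coeff_X_mul, coeff_X_mul, coeff_X_mul_derivative]; push_cast; ring

/-- The factor `1 - z` clears the truncated exponent `n - 1` in the derivative. -/
lemma one_sub_X_mul_derivative_pow (n : ℕ) :
    (1 - X : ℝ[X]) * derivative ((1 - X : ℝ[X]) ^ n) = -(n : ℝ[X]) * (1 - X) ^ n := by
  cases n with
  | zero => simp
  | succ n => simp [derivative_pow]; ring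

lemma one_add_mul_X_mul_derivative_pow (r : ℝ) (d : ℕ) :
    (1 + C r * X : ℝ[X]) * derivative ((1 + C r * X : ℝ[X]) ^ d) =
      C r * (d : ℝ[X]) * (1 + C r * X) ^ d := by
  cases d with
  | zero => simp
  | succ d => simp [derivative_pow]; ring

/-- The logarithmic derivative of the generating function, with denominators cleared. -/
lemma krawGen_ode (r : ℝ) (n d : ℕ) :
    (1 - X) * (1 + C r * X) * derivative (krawGen r n d) =
      (-(n : ℝ[X]) * (1 + C r * X) + C r * (d : ℝ[X]) * (1 - X)) * krawGen r n d := by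
  rw [krawGen, derivative_mul]
  linear_combination (1 + C r * X : ℝ[X]) * (1 + C r * X) ^ d * one_sub_X_mul_derivative_pow n +
    (1 - X : ℝ[X]) * (1 - X) ^ n * one_add_mul_X_mul_derivative_pow r d

/-- The difference equation of the Krawtchouk polynomials: `krawGen_ode` times `1 - p`, compared
coefficientwise. -/
lemma kraw_difference (p : ℝ) (hp : 0 < p) (hp' : p < 1) (N n x : ℕ) (hn : n ≤ N) :
    (1 - p) * (((x : ℝ) + 1) * kraw p N n ((x : ℤ) + 1))
      + p * ((N : ℝ) - x + 1) * kraw p N n ((x : ℤ) - 1)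
      - ((1 - p) * ((x : ℝ) + 1) + p * ((N : ℝ) - x + 1)) * kraw p N n x
      = -((n : ℝ) + 1) * kraw p N n x := by
  have hq : (1 - p) ≠ 0 := by linarith
  rw [kraw_add_one_eq_coeff p hp hp' N n x hn, kraw_sub_one_eq_coeff p hp hp' N n x hn,
    kraw_eq_coeff p hp hp' N n x hn]
  obtain ⟨d, rfl⟩ := Nat.exists_eq_add_of_le hn
  rw [Nat.add_sub_cancel_left]
  set r := p / (1 - p) with hr
  set F := krawGen r n d
  have hC : (C (1 - p) : ℝ[X]) * C r = C p := by rw [← C_mul, hr]; congr 1; field_simp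
  have hC1 : (C (1 - p) : ℝ[X]) = 1 - C p := by simp
  have key : C (1 - p) * derivative F
      + C p * (C ((n + d : ℕ) : ℝ) * (X * F) - X * (X * derivative F))
      - C (1 - p) * (X * derivative F + F)
      - C p * (C ((n + d : ℕ) + 1 : ℝ) * F - X * derivative F) = C (-((n : ℝ) + 1)) * F := by
    have h := krawGen_ode r n d
    simp only [Nat.cast_add, C_add, C_neg, C_1, map_natCast]
    rw [hC1] at hC ⊢
    linear_combination (1 - C p) * h + (-(1 - X) * X * derivative F
      + (-(n : ℝ[X]) * X + (d : ℝ[X]) * (1 - X)) * F) * hC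
  have := congrArg (fun P => P.coeff x) key
  simp only [coeff_add, coeff_sub, coeff_C_mul, coeff_X_mul_derivative,
    coeff_X_mul_X_mul_derivative] at this
  linear_combination this

/-- Multiplying the generating function by `1 + r z` raises `N` by one. -/
lemma kraw_up (p : ℝ) (hp : 0 < p) (hp' : p < 1) (N n x : ℕ) (hn : n ≤ N) :
    kraw p N n x + p / (1 - p) * kraw p N n ((x : ℤ) - 1) = kraw p (N + 1) n x := by
  rw [kraw_sub_one_eq_coeff p hp hp' N n x hn, kraw_eq_coeff p hp hp' N n x hn,
    kraw_eq_coeff p hp hp' (N + 1) n x (by omega), ← coeff_C_mul, ← coeff_add]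
  congr 1
  rw [krawGen, krawGen, Nat.succ_sub hn, pow_succ]
  ring

/-- In terms of generating functions, `(N + 1) G + (1 - z) G'` removes a factor `1 + r z` from `G`.
For `n = N + 1` there is no such factor, and the right-hand side is zero. -/
lemma kraw_down (p : ℝ) (hp : 0 < p) (hp' : p < 1) (N n x : ℕ) (hn : n ≤ N + 1) :
    (1 - p) * (((N : ℝ) + 1 - x) * kraw p (N + 1) n x
      + ((x : ℝ) + 1) * kraw p (N + 1) n ((x : ℤ) + 1)) = ((N : ℝ) + 1 - n) * kraw p N n x := by
  have hq : (1 - p) ≠ 0 := by linarith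
  rw [kraw_add_one_eq_coeff p hp hp' (N + 1) n x hn, kraw_eq_coeff p hp hp' (N + 1) n x hn]
  have hred : ∀ F : ℝ[X], (C ((N : ℝ) + 1) * F + derivative F - X * derivative F).coeff x =
      ((N : ℝ) + 1 - x) * F.coeff x + (derivative F).coeff x := by
    intro F
    rw [coeff_sub, coeff_add, coeff_C_mul, coeff_X_mul_derivative]; ring
  rw [← hred, ← coeff_C_mul]
  rcases Nat.lt_or_ge N n with h | h
  · obtain rfl : n = N + 1 := by omega
    have h1 := one_sub_X_mul_derivative_pow (N + 1)
    have h0 : C ((N : ℝ) + 1) * krawGen (p / (1 - p)) (N + 1) (N + 1 - (N + 1))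
        + derivative (krawGen (p / (1 - p)) (N + 1) (N + 1 - (N + 1)))
        - X * derivative (krawGen (p / (1 - p)) (N + 1) (N + 1 - (N + 1))) = 0 := by
      simp only [krawGen, Nat.sub_self, pow_zero, mul_one, C_add, C_1, map_natCast]
      push_cast at h1
      linear_combination h1
    rw [h0]; simp
  · rw [kraw_eq_coeff p hp hp' N n x h, ← coeff_C_mul]
    congr 1
    obtain ⟨d, rfl⟩ := Nat.exists_eq_add_of_le h
    have e : n + d + 1 - n = d + 1 := by omega
    rw [e, Nat.add_sub_cancel_left]
    set r := p / (1 - p) with hr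
    have hC : (C (1 - p) : ℝ[X]) * C r = C p := by rw [← C_mul, hr]; congr 1; field_simp
    have hC1 : (C (1 - p) : ℝ[X]) = 1 - C p := by simp
    have hd : derivative ((1 + C r * X : ℝ[X]) ^ (d + 1)) =
        C r * ((d : ℝ[X]) + 1) * (1 + C r * X) ^ d := by
      simp [derivative_pow]; ring
    have h1 := one_sub_X_mul_derivative_pow n
    rw [krawGen, krawGen, derivative_mul, hd]
    simp only [Nat.cast_add, C_add, C_sub, C_1, map_natCast]
    rw [hC1] at hC
    linear_combination (1 - C p) * (1 + C r * X) ^ (d + 1) * h1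
      + ((d : ℝ[X]) + 1) * (1 - X) ^ n * (1 + C r * X) ^ d * hC

/-! ### The bivariate relation -/

lemma tratnik_natCast (p1 p2 : ℝ) (N i j x : ℕ) (y : ℤ) (hx : x ≤ N) :
    tratnik p1 p2 N i j x y = kraw p1 (N - j) i x * kraw p2 (N - x) j y := by
  rw [tratnik, if_neg (by omega), Int.toNat_natCast]

/-- The terms at `x + 1` sum to a multiple of `k_j(y; p2, N - x)`. For `x + 1 > N - j`, where
`kraw_up` does not apply, the factor `k_i(x + 1; p1, N - j)` vanishes. -/
lemma tratnik_up (N : ℕ) (p1 p2 : ℝ) (hp2 : 0 < p2) (hp2' : p2 < 1)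
    (i j x y : ℕ) (hij : i + j ≤ N) :
    tratnik p1 p2 N i j ((x : ℤ) + 1) y
      + p2 / (1 - p2) * tratnik p1 p2 N i j ((x : ℤ) + 1) ((y : ℤ) - 1) =
    kraw p1 (N - j) i ((x : ℤ) + 1) * kraw p2 (N - x) j y := by
  have hc : ((x : ℤ) + 1) = ((x + 1 : ℕ) : ℤ) := by push_cast; ring
  rw [hc]
  rcases Nat.lt_or_ge (N - j) (x + 1) with h | h
  · have h0 := kraw_eq_zero_of_lt p1 (N - j) i ((x + 1 : ℕ) : ℤ) (by omega)
    have hT : ∀ v, tratnik p1 p2 N i j ((x + 1 : ℕ) : ℤ) v = 0 := by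
      intro v; rw [tratnik, h0]; simp
    rw [hT, hT, h0]; simp
  · have h1 := kraw_up p2 hp2 hp2' (N - (x + 1)) j y (by omega)
    have e : N - (x + 1) + 1 = N - x := by omega
    rw [e] at h1
    rw [tratnik_natCast _ _ _ _ _ _ _ (by omega), tratnik_natCast _ _ _ _ _ _ _ (by omega), ← h1]
    ring

/-- The terms at `x - 1` sum to a multiple of `k_j(y; p2, N - x)`. The case `x - 1 = N - j` uses
`kraw_down` with `n` one larger than its `N`; beyond it `k_i(x - 1; p1, N - j)` vanishes. -/
lemma tratnik_down (N : ℕ) (p1 p2 : ℝ) (hp2 : 0 < p2) (hp2' : p2 < 1)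
    (i j x y : ℕ) (hij : i + j ≤ N) (hx : x ≤ N) :
    (1 - p2) * (((N : ℝ) - x - y + 1) * tratnik p1 p2 N i j ((x : ℤ) - 1) y
      + ((y : ℝ) + 1) * tratnik p1 p2 N i j ((x : ℤ) - 1) ((y : ℤ) + 1)) =
    kraw p1 (N - j) i ((x : ℤ) - 1) * (((N : ℝ) - x - j + 1) * kraw p2 (N - x) j y) := by
  cases x with
  | zero => simp [tratnik, kraw]
  | succ x =>
    have hc : (((x + 1 : ℕ) : ℤ) - 1) = (x : ℤ) := by push_cast; ring
    rw [hc, tratnik_natCast _ _ _ _ _ _ _ (by omega), tratnik_natCast _ _ _ _ _ _ _ (by omega)]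
    rcases Nat.lt_or_ge (N - j) x with h | h
    · rw [kraw_eq_zero_of_lt p1 (N - j) i (x : ℤ) (by omega)]; simp
    · have h1 := kraw_down p2 hp2 hp2' (N - (x + 1)) j y (by omega)
      have e : N - (x + 1) + 1 = N - x := by omega
      rw [e] at h1
      have e2 : ((N - (x + 1) : ℕ) : ℝ) = (N : ℝ) - (x + 1) := by
        rw [Nat.cast_sub hx]; push_cast; ring
      rw [e2] at h1
      push_cast
      linear_combination kraw p1 (N - j) i (x : ℤ) * h1

/-- Difference relation (second) for the bivariate Tratnik polynomials. -/
theorem tratnik_difference_i (N : ℕ) (p1 p2 : ℝ)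
    (hp1 : 0 < p1) (hp1' : p1 < 1) (hp2 : 0 < p2) (hp2' : p2 < 1)
    (i j : ℕ) (hij : i + j ≤ N)
    (x y : ℤ) (hx : 0 ≤ x) (hy : 0 ≤ y) (hxy : x + y ≤ (N : ℤ)) :
    -((i : ℝ) + 1) * tratnik p1 p2 N i j x y =
      (1 - p1) * ((x : ℝ) + 1) * tratnik p1 p2 N i j (x + 1) y
      + p1 * (1 - p2) * ((N : ℝ) - x - y + 1) * tratnik p1 p2 N i j (x - 1) y
      - p1 * (1 - p2) * ((y : ℝ) + 1) * tratnik p1 p2 N i j x (y + 1)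
      - p1 * p2 * ((N : ℝ) - x - y + 1) * tratnik p1 p2 N i j x (y - 1)
      + ((1 - p1) * p2 / (1 - p2)) * ((x : ℝ) + 1) * tratnik p1 p2 N i j (x + 1) (y - 1)
      + p1 * (1 - p2) * ((y : ℝ) + 1) * tratnik p1 p2 N i j (x - 1) (y + 1)
      - ((1 - p1) * ((x : ℝ) + 1) + p1 * p2 * ((y : ℝ) + 1)
          + p1 * (1 - p2) * ((N : ℝ) - x - y + 1)) * tratnik p1 p2 N i j x y := by
  lift x to ℕ using hx
  lift y to ℕ using hy
  have hxN : x ≤ N := by omega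
  have hup := tratnik_up N p1 p2 hp2 hp2' i j x y hij
  have hdown := tratnik_down N p1 p2 hp2 hp2' i j x y hij hxN
  have hi := kraw_difference p1 hp1 hp1' (N - j) i x (by omega)
  have hj : kraw p1 (N - j) i x * ((1 - p2) * (((y : ℝ) + 1) * kraw p2 (N - x) j ((y : ℤ) + 1))
      + p2 * (((N - x : ℕ) : ℝ) - y + 1) * kraw p2 (N - x) j ((y : ℤ) - 1)
      - ((1 - p2) * ((y : ℝ) + 1) + p2 * (((N - x : ℕ) : ℝ) - y + 1)) * kraw p2 (N - x) j y)
      = kraw p1 (N - j) i x * (-((j : ℝ) + 1) * kraw p2 (N - x) j y) := by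
    rcases Nat.lt_or_ge (N - j) x with h | h
    · rw [kraw_eq_zero_of_lt p1 (N - j) i (x : ℤ) (by omega)]; simp
    · rw [kraw_difference p2 hp2 hp2' (N - x) j y (by omega)]
  rw [Nat.cast_sub hxN] at hj
  rw [Nat.cast_sub (by omega : j ≤ N)] at hi
  simp only [Int.cast_natCast, tratnik_natCast p1 p2 N i j x _ hxN]
  linear_combination (-(1 - p1) * ((x : ℝ) + 1)) * hup - p1 * hdown + p1 * hj
    - kraw p2 (N - x) j y * hi
end

section
/- Let N be a natural number and p a real with 0 < p < 1. Then for all natural numbers n, x with n ≤ N and x ≤ N, the Krawtchouk polynomials satisfy the dual forward relation (1/(1−p)) · k_n(x;p,N) = k_n(x+1;p,N+1) − k_{n+1}(x+1;p,N+1). -/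
/-- At a natural number `x` the sum may run up to `x` whatever `n` is, because `C(n,m) = 0` for
`m > n`. This gives a summation range independent of `n`. -/
theorem kraw_natCast_s15 (p : ℝ) (N n x : ℕ) :
    kraw p N n (x : ℤ) = (p / (1 - p)) ^ x * (N.choose x : ℝ) *
      ∑ m ∈ Finset.range (x + 1),
        (-1 : ℝ) ^ m * (n.choose m : ℝ) * (x.choose m : ℝ) * (m.factorial : ℝ) *
          ((N - m).factorial / (N.factorial : ℝ)) * (p ^ m)⁻¹ := by
  have hneg : ¬ ((x : ℤ) < 0) := by lia
  simp only [kraw, if_neg hneg, Int.toNat_natCast, zpow_natCast, zpow_neg]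
  congr 1
  apply Finset.sum_subset
  · intro m hm
    simp only [Finset.mem_range] at hm ⊢
    lia
  · intro m hm hm'
    simp only [Finset.mem_range] at hm hm'
    have h : n.choose m = 0 := Nat.choose_eq_zero_of_lt (by lia)
    simp [h]

/-- Dual forward relation for the Krawtchouk polynomials. -/
theorem kraw_dual_forward (N : ℕ) (p : ℝ)
    (hp : 0 < p) (hp' : p < 1) (n x : ℕ) (hn : n ≤ N) (hx : x ≤ N) :
    (1 / (1 - p)) * kraw p N n (x : ℤ) =
      kraw p (N + 1) n ((x : ℤ) + 1) - kraw p (N + 1) (n + 1) ((x : ℤ) + 1) := by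
  have hcast : ((x : ℤ) + 1) = ((x + 1 : ℕ) : ℤ) := by push_cast; rfl
  rw [hcast, kraw_natCast_s15, kraw_natCast_s15, kraw_natCast_s15, ← mul_sub, ← Finset.sum_sub_distrib,
    Finset.sum_range_succ' _ (x + 1)]
  simp only [Nat.choose_zero_right, sub_self, add_zero]
  rw [Finset.mul_sum, Finset.mul_sum, Finset.mul_sum]
  refine Finset.sum_congr rfl fun j _ => ?_
  have hp0 : p ≠ 0 := hp.ne'
  have hq0 : 1 - p ≠ 0 := by linarith
  have hN : (N.factorial : ℝ) ≠ 0 := by positivity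
  have hN1 : (N : ℝ) + 1 ≠ 0 := by positivity
  have h1 : ((x : ℝ) + 1) * x.choose j = (x + 1).choose (j + 1) * ((j : ℝ) + 1) := by
    exact_mod_cast Nat.add_one_mul_choose_eq x j
  have h2 : ((N : ℝ) + 1) * N.choose x = (N + 1).choose (x + 1) * ((x : ℝ) + 1) := by
    exact_mod_cast Nat.add_one_mul_choose_eq N x
  have key : (N.choose x : ℝ) * x.choose j =
      (N + 1).choose (x + 1) * ((x + 1).choose (j + 1) * ((j : ℝ) + 1)) / ((N : ℝ) + 1) := by
    rw [eq_div_iff hN1, ← h1]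
    linear_combination (x.choose j : ℝ) * h2
  have hpascal : ((n + 1).choose (j + 1) : ℝ) = n.choose j + n.choose (j + 1) := by
    exact_mod_cast Nat.choose_succ_succ n j
  rw [hpascal, Nat.add_sub_add_right, Nat.factorial_succ, Nat.factorial_succ N]
  push_cast
  calc _ = 1 / (1 - p) * (p / (1 - p)) ^ x * ((-1) ^ j * n.choose j * j.factorial *
          ((N - j).factorial / N.factorial) * (p ^ j)⁻¹) * (N.choose x * x.choose j) := by ring
    _ = _ := by
      rw [key, pow_succ, pow_succ, pow_succ]
      field_simp
      ring
end

section
/- Let N ≥ 1 be a natural number and p a real with 0 < p < 1. Then for all natural numbers n, x with 1 ≤ n ≤ N−1 and 1 ≤ x ≤ N, the Krawtchouk polynomials satisfy the dual backward relation x · k_n(x;p,N) = (p(N−n)/(1−p)) · k_n(x−1;p,N−1) − n · k_{n−1}(x−1;p,N−1), where N−n denotes a real number (for n = 0 the relation also holds with the term n·k_{n−1} equal to zero). -/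
/-- The `m`-th term of the sum in `kraw`, as a function of `q = p⁻¹`. -/
noncomputable def krawTerm (q : ℝ) (N n x m : ℕ) : ℝ :=
  (-1 : ℝ) ^ m * (n.choose m : ℝ) * (x.choose m : ℝ) * (m.factorial : ℝ) *
    ((N - m).factorial / (N.factorial : ℝ)) * q ^ m

/-- The terminating series `₂F₁(-n, -x; -N; q)`, summed over all `m ≤ n`. -/
noncomputable def krawSum (q : ℝ) (N n x : ℕ) : ℝ :=
  ∑ m ∈ Finset.range (n + 1), krawTerm q N n x m

/-- The truncation of the sum at `min n x` is harmless, as `C(x, m) = 0` for `m > x`. -/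
lemma kraw_natCast_s16 (p : ℝ) (N n x : ℕ) :
    kraw p N n (x : ℤ) = (p / (1 - p)) ^ x * (N.choose x : ℝ) * krawSum p⁻¹ N n x := by
  have h : ¬ ((x : ℤ) < 0) := by omega
  unfold kraw krawSum
  rw [if_neg h, Int.toNat_natCast, zpow_natCast]
  congr 1
  have hsub : Finset.range (min n x + 1) ⊆ Finset.range (n + 1) := by
    intro a ha
    simp only [Finset.mem_range] at *
    omega
  rw [← Finset.sum_subset (f := krawTerm p⁻¹ N n x) hsub]
  · refine Finset.sum_congr rfl fun m _ => ?_
    simp [krawTerm]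
  · intro m hm hm'
    simp only [Finset.mem_range] at hm hm'
    have : x.choose m = 0 := Nat.choose_eq_zero_of_lt (by omega)
    simp [krawTerm, this]

/-- The two terms on the right that carry a factor `p` combine into one. -/
lemma krawTerm_combine (q : ℝ) (M k y m : ℕ) (hm : m ≤ k + 1) (hk : k + 1 ≤ M) :
    ((M : ℝ) - k) * krawTerm q M (k + 1) y m + ((k : ℝ) + 1) * krawTerm q M k y m =
      (-1 : ℝ) ^ m * ((k + 1).choose m : ℝ) * (y.choose m : ℝ) * (m.factorial : ℝ) *
        ((M + 1 - m).factorial / (M.factorial : ℝ)) * q ^ m := by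
  have hc : ((k : ℝ) + 1) * (k.choose m : ℝ) = ((k + 1).choose m : ℝ) * ((k : ℝ) + 1 - m) := by
    have h := Nat.add_one_mul_choose_eq k m
    have h' := Nat.choose_succ_right_eq (k + 1) m
    have h2 : (k + 1) * k.choose m = (k + 1).choose m * (k + 1 - m) := by rw [h, h']
    have h3 : (((k + 1) * k.choose m : ℕ) : ℝ) = (((k + 1).choose m * (k + 1 - m) : ℕ) : ℝ) := by
      rw [h2]
    push_cast [Nat.cast_sub hm] at h3
    exact h3
  have hf : ((M + 1 - m).factorial : ℝ) = ((M : ℝ) + 1 - m) * ((M - m).factorial : ℝ) := by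
    have hmM : m ≤ M := by omega
    rw [Nat.succ_sub hmM, Nat.factorial_succ]
    push_cast [Nat.cast_sub hmM]
    ring
  unfold krawTerm
  rw [hf]
  linear_combination ((-1 : ℝ) ^ m * (y.choose m : ℝ) * (m.factorial : ℝ) *
    ((M - m).factorial / (M.factorial : ℝ)) * q ^ m) * hc

/-- The dual backward relation for the hypergeometric sums, divided by `p`. -/
lemma krawSum_rec (q : ℝ) (M k y : ℕ) (hk : k + 1 ≤ M) :
    ((M : ℝ) + 1) * krawSum q (M + 1) (k + 1) (y + 1) =
      ((M : ℝ) - k) * krawSum q M (k + 1) y - (q - 1) * ((k : ℝ) + 1) * krawSum q M k y := by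
  have hext : krawSum q M k y = ∑ m ∈ Finset.range (k + 1 + 1), krawTerm q M k y m := by
    rw [Finset.sum_range_succ]
    simp [krawSum, krawTerm]
  have hB : ((M : ℝ) - k) * krawSum q M (k + 1) y + ((k : ℝ) + 1) * krawSum q M k y =
      ∑ m ∈ Finset.range (k + 1 + 1), ((-1 : ℝ) ^ m * ((k + 1).choose m : ℝ) * (y.choose m : ℝ) *
        (m.factorial : ℝ) * ((M + 1 - m).factorial / (M.factorial : ℝ)) * q ^ m) := by
    rw [hext]
    unfold krawSum
    rw [Finset.mul_sum, Finset.mul_sum, ← Finset.sum_add_distrib]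
    refine Finset.sum_congr rfl fun m hm => krawTerm_combine q M k y m ?_ hk
    simp only [Finset.mem_range] at hm
    omega
  have hM : (M.factorial : ℝ) ≠ 0 := by positivity
  have hM1 : (M : ℝ) + 1 ≠ 0 := by positivity
  have hA : ((M : ℝ) + 1) * krawSum q (M + 1) (k + 1) (y + 1) =
      ∑ m ∈ Finset.range (k + 1 + 1), ((-1 : ℝ) ^ m * ((k + 1).choose m : ℝ) * (y.choose m : ℝ) *
        (m.factorial : ℝ) * ((M + 1 - m).factorial / (M.factorial : ℝ)) * q ^ m)
      - q * ((k : ℝ) + 1) * krawSum q M k y := by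
    unfold krawSum
    -- The last sum is shifted by one in `m`, so the `m = 0` terms are split off the other two.
    rw [Finset.sum_range_succ', Finset.sum_range_succ' _ (k + 1), mul_add, Finset.mul_sum,
      Finset.mul_sum, add_sub_right_comm, ← Finset.sum_sub_distrib]
    congr 1
    · refine Finset.sum_congr rfl fun m _ => ?_
      have hc : ((k : ℝ) + 1) * (k.choose m : ℝ) = ((k + 1).choose (m + 1) : ℝ) * ((m : ℝ) + 1) := by
        exact_mod_cast Nat.add_one_mul_choose_eq k m
      unfold krawTerm
      rw [Nat.add_sub_add_right, Nat.choose_succ_succ y m, Nat.factorial_succ M,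
        Nat.factorial_succ m]
      push_cast
      field_simp
      linear_combination (-1 : ℝ) ^ m * (y.choose m : ℝ) * q ^ (m + 1) * hc
    · simp only [krawTerm, Nat.factorial_succ, Nat.sub_zero]
      push_cast
      simp
      field_simp
  rw [hA, ← hB]
  ring

/-- Dual backward relation for the Krawtchouk polynomials. -/
theorem kraw_dual_backward (N : ℕ) (hN : 1 ≤ N) (p : ℝ)
    (hp : 0 < p) (hp' : p < 1) (n x : ℕ) (hn1 : 1 ≤ n) (hn : n ≤ N - 1)
    (hx1 : 1 ≤ x) (hx : x ≤ N) :
    (x : ℝ) * kraw p N n (x : ℤ) =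
      (p * ((N : ℝ) - n) / (1 - p)) * kraw p (N - 1) n ((x : ℤ) - 1)
        - (n : ℝ) * kraw p (N - 1) (n - 1) ((x : ℤ) - 1) := by
  obtain ⟨M, rfl⟩ : ∃ M, N = M + 1 := ⟨N - 1, by omega⟩
  obtain ⟨k, rfl⟩ : ∃ k, n = k + 1 := ⟨n - 1, by omega⟩
  obtain ⟨y, rfl⟩ : ∃ y, x = y + 1 := ⟨x - 1, by omega⟩
  have hxy : ((y + 1 : ℕ) : ℤ) - 1 = (y : ℤ) := by push_cast; ring
  have hrec := krawSum_rec p⁻¹ M k y (by omega)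
  have hc : ((y : ℝ) + 1) * ((M + 1).choose (y + 1) : ℝ) = ((M : ℝ) + 1) * (M.choose y : ℝ) := by
    have h : (M + 1) * M.choose y = (M + 1).choose (y + 1) * (y + 1) :=
      Nat.add_one_mul_choose_eq M y
    have h' : ((M : ℝ) + 1) * (M.choose y : ℝ) = ((M + 1).choose (y + 1) : ℝ) * ((y : ℝ) + 1) := by
      exact_mod_cast h
    rw [h', mul_comm]
  have hr : p / (1 - p) * (p⁻¹ - 1) = 1 := by
    have h1 : 1 - p ≠ 0 := by linarith
    field_simp
  rw [hxy, kraw_natCast_s16, kraw_natCast_s16, kraw_natCast_s16]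
  simp only [Nat.add_sub_cancel]
  push_cast
  rw [pow_succ]
  linear_combination
    ((p / (1 - p)) ^ y * (p / (1 - p)) * krawSum p⁻¹ (M + 1) (k + 1) (y + 1)) * hc +
    ((p / (1 - p)) ^ y * (p / (1 - p)) * (M.choose y : ℝ)) * hrec -
    ((p / (1 - p)) ^ y * (M.choose y : ℝ) * ((k : ℝ) + 1) * krawSum p⁻¹ M k y) * hr
end
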